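/- arXiv:1307.4308 — 2 statements merged into one kernel-verified Lean document; each statement's English description precedes it below -/
import Mathlib

section
/- There exists ε₀ ∈ (0,1) such that for every ε ∈ (0, ε₀] there exist a real λ₀ ≥ 1 and a natural number n₀ with the following property: for every n ≥ n₀, every m ≥ 1, every real λ with λ₀ ≤ λ and m²·λ ≤ ε·n, every integer l with m²·λ/ε < l ≤ n, and every nonempty family U of m-element subsets of [n], there exists a set g ⊆ [n] with |g| ≤ κ(U) / ln( ε·l/(m²·λ) ) such that |Ext(U_g, l)| ≥ C(n − |g|, l − |g|) · (1 − e^{−λ}). -/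
/-- The `l`-extension of a family `U` inside the space `[n] = {1, …, n}`:
all `l`-element subsets of `[n]` containing some member of `U`. -/
def extFam (n : ℕ) (U : Finset (Finset ℕ)) (l : ℕ) : Finset (Finset ℕ) :=
  ((Finset.Icc 1 n).powersetCard l).filter (fun t => ∃ s ∈ U, s ⊆ t)

/-- The sparsity `κ(U) = ln C(n,m) − ln |U|` of a family of `m`-subsets of `[n]`. -/
noncomputable def sparsity (n m : ℕ) (U : Finset (Finset ℕ)) : ℝ :=
  Real.log (n.choose m) - Real.log U.card

section helper

open Finset

/-- ratio -/
noncomputable def rhoR (N q a : ℕ) : ℝ := (q.choose a : ℝ) / (N.choose a : ℝ)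

lemma rhoR_nonneg (N q a : ℕ) : 0 ≤ rhoR N q a := by unfold rhoR; positivity

lemma rhoR_succ (N q a : ℕ) (hq : q ≤ N) (ha : a < q) :
    rhoR N q (a+1) = rhoR N q a * (((q:ℝ) - a) / ((N:ℝ) - a)) := by
  unfold rhoR
  have h1 := Nat.choose_succ_right_eq q a
  have h2 := Nat.choose_succ_right_eq N a
  have h1' : (q.choose (a+1) : ℝ) * (a+1) = q.choose a * ((q:ℝ) - a) := by
    rw [← Nat.cast_sub ha.le]; exact_mod_cast h1
  have h2' : (N.choose (a+1) : ℝ) * (a+1) = N.choose a * ((N:ℝ) - a) := by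
    rw [← Nat.cast_sub (by omega)]; exact_mod_cast h2
  have p1 : (0:ℝ) < N.choose (a+1) := by exact_mod_cast Nat.choose_pos (by omega)
  have p2 : (0:ℝ) < N.choose a := by exact_mod_cast Nat.choose_pos (by omega)
  have p3 : (0:ℝ) < (N:ℝ) - a := by
    have : (a:ℝ) < N := by exact_mod_cast (by omega : a < N)
    linarith
  have p4 : (0:ℝ) < (a:ℝ) + 1 := by positivity
  rw [div_mul_div_comm, div_eq_div_iff p1.ne' (by positivity)]
  apply mul_right_cancel₀ p4.ne'
  linear_combination (N.choose a * ((N:ℝ) - a)) * h1' - (q.choose a * ((q:ℝ) - a)) * h2'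

lemma rhoR_add_le (N q m : ℕ) (hq : q ≤ N) (i : ℕ) (hi : m + i ≤ q) :
    rhoR N q (m + i) ≤ rhoR N q m * rhoR N q i := by
  induction i with
  | zero => simp [rhoR]
  | succ i ih =>
    have ih := ih (by omega)
    rw [← add_assoc, rhoR_succ N q (m+i) hq (by omega), rhoR_succ N q i hq (by omega), ← mul_assoc]
    have hr : ((m + i + 1 : ℕ):ℝ) ≤ q := by exact_mod_cast (by omega : m + i + 1 ≤ q)
    have hqN : (q:ℝ) ≤ N := by exact_mod_cast hq
    push_cast at hr ⊢
    have hm : (0:ℝ) ≤ m := by positivity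
    apply mul_le_mul ih
    · rw [div_le_div_iff₀ (by linarith) (by linarith)]
      nlinarith
    · apply div_nonneg <;> linarith
    · exact mul_nonneg (rhoR_nonneg _ _ _) (rhoR_nonneg _ _ _)

lemma rhoR_lower (N q m : ℕ) (hq : q ≤ N) (hm : 2 * m ≤ q) (i j : ℕ) (hi : i + j ≤ m) :
    rhoR N q i ≤ rhoR N q (i + j) * (2 * N / q) ^ j := by
  induction j with
  | zero => simp
  | succ j ih =>
    have ih := ih (by omega)
    refine ih.trans ?_
    rw [← add_assoc, rhoR_succ N q (i+j) hq (by omega), pow_succ]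
    have hr : ((i + j + 1 : ℕ):ℝ) ≤ m := by exact_mod_cast (by omega : i + j + 1 ≤ m)
    have hqN : (q:ℝ) ≤ N := by exact_mod_cast hq
    have hmq : 2 * (m:ℝ) ≤ q := by exact_mod_cast hm
    push_cast at hr ⊢
    have h0 : (0:ℝ) ≤ (i:ℝ) + j := by positivity
    have key : (1:ℝ) ≤ ((q:ℝ) - (i + j)) / (N - (i + j)) * (2 * N / q) := by
      rw [div_mul_div_comm, le_div_iff₀ (mul_pos (by linarith) (by linarith))]
      nlinarith
    have : 0 ≤ rhoR N q (i+j) * (2 * N / q) ^ j := mul_nonneg (rhoR_nonneg _ _ _) (by positivity)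
    calc _ ≤ rhoR N q (i+j) * (2 * N / q) ^ j * 1 := by simp
      _ ≤ rhoR N q (i+j) * (2 * N / q) ^ j * (((q:ℝ) - (i + j)) / (N - (i + j)) * (2 * N / q)) :=
        mul_le_mul_of_nonneg_left key this
      _ = _ := by ring

lemma rhoR_union (N q m : ℕ) (hq : q ≤ N) (hm : 2 * m ≤ q) (j : ℕ) (hj : j ≤ m) :
    rhoR N q (2 * m - j) ≤ rhoR N q m ^ 2 * (2 * N / q) ^ j := by
  have h1 := rhoR_add_le N q m hq (m - j) (by omega)
  have h2 := rhoR_lower N q m hq hm (m - j) j (by omega)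
  rw [show m - j + j = m by omega] at h2
  rw [show 2 * m - j = m + (m - j) by omega]
  refine h1.trans ?_
  calc _ ≤ rhoR N q m * (rhoR N q m * (2 * N / q) ^ j) :=
        mul_le_mul_of_nonneg_left h2 (rhoR_nonneg _ _ _)
    _ = _ := by ring

variable {α ι : Type*} [Fintype α] [DecidableEq α]

lemma card_supersets (A : Finset α) (q : ℕ) (hA : A.card ≤ q) (hq : q ≤ Fintype.card α) :
    (((univ.powersetCard q).filter (fun T => A ⊆ T)).card : ℝ)
      = (Fintype.card α).choose q * rhoR (Fintype.card α) q A.card := by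
  have h : ((univ.powersetCard q).filter (fun T => A ⊆ T)).card
      = (Fintype.card α - A.card).choose (q - A.card) := by
    rw [← card_compl, ← card_powersetCard]
    refine card_bij' (fun T _ => T \ A) (fun T _ => T ∪ A) ?_ ?_ ?_ ?_
    · intro T hT
      simp only [mem_filter, mem_powersetCard] at hT ⊢
      refine ⟨?_, ?_⟩
      · intro x hx; simp at hx ⊢; exact hx.2
      · rw [card_sdiff_of_subset hT.2, hT.1.2]
    · intro T hT
      simp only [mem_filter, mem_powersetCard] at hT ⊢
      refine ⟨⟨subset_univ _, ?_⟩, subset_union_right⟩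
      rw [card_union_of_disjoint, hT.2]
      · omega
      · rw [← subset_compl_iff_disjoint_right]; exact hT.1
    · intro T hT
      simp only [mem_filter, mem_powersetCard] at hT
      exact sdiff_union_of_subset hT.2
    · intro T hT
      simp only [mem_powersetCard] at hT
      apply union_sdiff_cancel_right
      rw [← subset_compl_iff_disjoint_right]; exact hT.1
  rw [h]
  unfold rhoR
  have := Nat.choose_mul (n := Fintype.card α) (k := q) (s := A.card) hA
  have p2 : (0:ℝ) < (Fintype.card α).choose A.card := by
    exact_mod_cast Nat.choose_pos (by omega)
  field_simp
  rw [mul_comm]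
  exact_mod_cast this.symm

lemma second_moment (I : Finset ι) (f : ι → Finset α) (m q : ℕ) (β : ℝ) (hβ : 0 ≤ β)
    (hI : I.Nonempty) (hf : ∀ i ∈ I, (f i).card = m)
    (hs : ∀ h : Finset α, ((I.filter (fun i => h ⊆ f i)).card : ℝ) ≤ I.card * β ^ h.card)
    (hq : q ≤ Fintype.card α) (hm : 2 * m ≤ q) :
    ((Fintype.card α).choose q : ℝ) ≤
     ((univ.powersetCard q).filter (fun T => ∃ i ∈ I, f i ⊆ T)).card *
      (1 + 2 * Fintype.card α / q * β) ^ m := by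
  classical
  set N := Fintype.card α with hN
  set P := (univ : Finset α).powersetCard q with hP
  set X : Finset α → ℝ := fun T => ∑ i ∈ I, if f i ⊆ T then 1 else 0 with hX
  set x : ℝ := 2 * N / q with hx
  have hx0 : 0 ≤ x := by positivity
  have hCS : (∑ T ∈ P, X T) ^ 2 ≤ ((P.filter (fun T => ∃ i ∈ I, f i ⊆ T)).card : ℝ) * ∑ T ∈ P, X T ^ 2 := by
    have h1 : ∑ T ∈ P, X T = ∑ T ∈ P.filter (fun T => ∃ i ∈ I, f i ⊆ T), X T := by
      symm
      apply sum_subset (filter_subset _ _)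
      intro T hT hT'
      simp only [mem_filter, not_and, not_exists] at hT'
      apply sum_eq_zero
      intro i hi
      rw [if_neg (hT' hT i hi)]
    rw [h1]
    refine sq_sum_le_card_mul_sum_sq.trans ?_
    gcongr
    exact filter_subset _ _
  have hE : ∑ T ∈ P, X T = I.card * (N.choose q * rhoR N q m) := by
    rw [hX, sum_comm, ← nsmul_eq_mul, ← sum_const]
    apply sum_congr rfl
    intro i hi
    rw [← hf i hi, ← card_supersets (f i) q (by rw [hf i hi]; omega) hq, sum_boole]
  have hE2 : ∑ T ∈ P, X T ^ 2 ≤ N.choose q * rhoR N q m ^ 2 * (I.card ^ 2 * (1 + x * β) ^ m) := by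
    have e1 : ∑ T ∈ P, X T ^ 2 = ∑ i ∈ I, ∑ j ∈ I, N.choose q * rhoR N q (f i ∪ f j).card := by
      simp only [hX, sq, sum_mul_sum]
      rw [sum_comm]
      apply sum_congr rfl
      intro i hi
      rw [sum_comm]
      apply sum_congr rfl
      intro j hj
      have hc : (f i ∪ f j).card ≤ q := by
        have := card_union_le (f i) (f j)
        rw [hf i hi, hf j hj] at this; omega
      rw [← card_supersets (f i ∪ f j) q hc hq, ← sum_boole]
      apply sum_congr rfl
      intro T _
      simp only [union_subset_iff]
      by_cases h1 : f i ⊆ T <;> by_cases h2 : f j ⊆ T <;> simp [h1, h2]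
    have e2 : ∀ i ∈ I, ∑ j ∈ I, x ^ (f i ∩ f j).card ≤ I.card * (1 + x * β) ^ m := by
      intro i hi
      have a1 : ∀ j ∈ I, x ^ (f i ∩ f j).card ≤ ∑ h ∈ (f i).powerset, if h ⊆ f j then x ^ h.card else 0 := by
        intro j hj
        have := single_le_sum (f := fun h => if h ⊆ f j then x ^ h.card else 0) (s := (f i).powerset)
          (by intro h _; split_ifs <;> positivity)
          (mem_powerset.2 (inter_subset_left : f i ∩ f j ⊆ f i))
        simpa using this
      calc _ ≤ _ := sum_le_sum a1
        _ = ∑ h ∈ (f i).powerset, x ^ h.card * ((I.filter (fun i => h ⊆ f i)).card : ℝ) := by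
          rw [sum_comm]
          apply sum_congr rfl
          intro h _
          rw [← sum_filter, sum_const, nsmul_eq_mul, mul_comm]
        _ ≤ ∑ h ∈ (f i).powerset, x ^ h.card * (I.card * β ^ h.card) := by
          apply sum_le_sum
          intro h _
          exact mul_le_mul_of_nonneg_left (hs h) (by positivity)
        _ = I.card * ∑ h ∈ (f i).powerset, (x * β) ^ h.card * 1 ^ ((f i).card - h.card) := by
          rw [mul_sum]
          apply sum_congr rfl
          intro h _
          rw [mul_pow]; ring
        _ = _ := by
          rw [sum_pow_mul_eq_add_pow, hf i hi, add_comm]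
    rw [e1]
    calc _ ≤ ∑ i ∈ I, ∑ j ∈ I, N.choose q * (rhoR N q m ^ 2 * x ^ (f i ∩ f j).card) := by
          apply sum_le_sum; intro i hi
          apply sum_le_sum; intro j hj
          apply mul_le_mul_of_nonneg_left _ (by positivity)
          have hc := card_union_add_card_inter (f i) (f j)
          rw [hf i hi, hf j hj] at hc
          have hc2 : (f i ∩ f j).card ≤ m := by
            rw [← hf i hi]; exact card_le_card inter_subset_left
          have := rhoR_union N q m hq hm _ hc2
          rwa [show 2 * m - (f i ∩ f j).card = (f i ∪ f j).card by omega] at this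
      _ = N.choose q * rhoR N q m ^ 2 * ∑ i ∈ I, ∑ j ∈ I, x ^ (f i ∩ f j).card := by
          simp only [mul_sum, mul_assoc]
      _ ≤ N.choose q * rhoR N q m ^ 2 * ∑ i ∈ I, I.card * (1 + x * β) ^ m := by
          apply mul_le_mul_of_nonneg_left (sum_le_sum e2) (by positivity)
      _ = _ := by rw [sum_const, nsmul_eq_mul]; ring
  have hpos : 0 < (I.card : ℝ) ^ 2 * (rhoR N q m ^ 2) * N.choose q := by
    have : (0:ℝ) < I.card := by exact_mod_cast hI.card_pos
    have h1 : (0:ℝ) < N.choose q := by exact_mod_cast Nat.choose_pos hq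
    have h2 : (0:ℝ) < rhoR N q m := by
      unfold rhoR
      apply div_pos <;> exact_mod_cast Nat.choose_pos (by omega)
    positivity
  rw [hE] at hCS
  have h3 := hCS.trans (mul_le_mul_of_nonneg_left hE2 (Nat.cast_nonneg _))
  refine le_of_mul_le_mul_left ?_ hpos
  calc _ = _ := by ring
    _ ≤ _ := h3
    _ = _ := by ring

/-- avoidance probability -/
noncomputable def avoidP (B : Finset α → Prop) (C : Finset α) : ℝ := by
  classical
  exact (∑ σ : Equiv.Perm α, if B (C.map σ.toEmbedding) then (1:ℝ) else 0) / Fintype.card (Equiv.Perm α)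

lemma permcard_pos : (0:ℝ) < Fintype.card (Equiv.Perm α) := by
  exact_mod_cast Fintype.card_pos

lemma avoidP_nonneg (B : Finset α → Prop) (C : Finset α) : 0 ≤ avoidP B C := by
  unfold avoidP
  positivity

lemma avoidP_le_one (B : Finset α → Prop) (C : Finset α) : avoidP B C ≤ 1 := by
  classical
  unfold avoidP
  rw [div_le_one permcard_pos]
  refine (sum_le_sum (g := fun _ => (1:ℝ)) ?_).trans ?_
  · intro σ _; split_ifs <;> norm_num
  · simp

lemma avoidP_anti (B : Finset α → Prop) (hB : ∀ S T, S ⊆ T → B T → B S) {C D : Finset α}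
    (h : C ⊆ D) : avoidP B D ≤ avoidP B C := by
  classical
  unfold avoidP
  gcongr with σ
  by_cases h1 : B (D.map σ.toEmbedding)
  · rw [if_pos h1, if_pos (hB _ _ (map_subset_map.2 h) h1)]
  · rw [if_neg h1]; split_ifs <;> norm_num

lemma avoidP_map (B : Finset α → Prop) (C : Finset α) (τ : Equiv.Perm α) :
    avoidP B (C.map τ.toEmbedding) = avoidP B C := by
  classical
  unfold avoidP
  congr 1
  refine Fintype.sum_equiv (Equiv.mulRight τ) _ _ ?_
  intro σ
  rw [map_map]
  rfl

lemma avoidP_eq (B : Finset α → Prop) {C D : Finset α} (h : C.card = D.card) :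
    avoidP B C = avoidP B D := by
  classical
  obtain ⟨τ, hτ⟩ : ∃ τ : Equiv.Perm α, C.map τ.toEmbedding = D := by
    let e : {x // x ∈ C} ≃ {x // x ∈ D} := Finset.equivOfCardEq h
    refine ⟨e.extendSubtype, ?_⟩
    apply eq_of_subset_of_card_le
    · intro y hy
      rw [mem_map] at hy
      obtain ⟨x, hx, rfl⟩ := hy
      exact e.extendSubtype_mem x hx
    · rw [card_map, h]
  rw [← hτ, avoidP_map]

lemma avoidP_mono (B : Finset α → Prop) (hB : ∀ S T, S ⊆ T → B T → B S) {C D : Finset α}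
    (h : C.card ≤ D.card) : avoidP B D ≤ avoidP B C := by
  obtain ⟨C', hC', hc⟩ := exists_subset_card_eq h
  rw [avoidP_eq B hc.symm]
  exact avoidP_anti B hB hC'

lemma avoidP_mul (B : Finset α → Prop) (hB : ∀ S T, S ⊆ T → B T → B S) {A C D : Finset α}
    (h : A.card + C.card ≤ D.card) : avoidP B D ≤ avoidP B A * avoidP B C := by
  classical
  set M : ℝ := ((Fintype.card (Equiv.Perm α) : ℕ) : ℝ) with hM
  have hMp : 0 < M := permcard_pos
  set b : Finset α → ℝ := fun S => if B S then 1 else 0 with hb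
  have hdef : ∀ S, ∑ σ : Equiv.Perm α, b (S.map σ.toEmbedding) = M * avoidP B S := by
    intro S
    unfold avoidP
    rw [mul_div_cancel₀ _ hMp.ne']
  have hbb : ∀ S T, b (S ∪ T) ≤ b S * b T := by
    intro S T
    simp only [hb]
    by_cases h1 : B (S ∪ T)
    · rw [if_pos h1, if_pos (hB _ _ subset_union_left h1), if_pos (hB _ _ subset_union_right h1)]
      norm_num
    · rw [if_neg h1]; split_ifs <;> norm_num
  have hre : ∀ S (ρ : Equiv.Perm α), ∑ σ : Equiv.Perm α, b ((S.map σ.toEmbedding).map ρ.toEmbedding) = M * avoidP B S := by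
    intro S ρ
    rw [← hdef]
    refine Fintype.sum_equiv (Equiv.mulLeft ρ) _ _ ?_
    intro σ
    rw [map_map]
    rfl
  have h1 : ∑ ρ : Equiv.Perm α, ∑ σ : Equiv.Perm α, ∑ τ : Equiv.Perm α,
      b ((A.map σ.toEmbedding ∪ C.map τ.toEmbedding).map ρ.toEmbedding) ≤
      M * ((M * avoidP B A) * (M * avoidP B C)) := by
    calc _ ≤ ∑ ρ : Equiv.Perm α, ∑ σ : Equiv.Perm α, ∑ τ : Equiv.Perm α,
          b ((A.map σ.toEmbedding).map ρ.toEmbedding) * b ((C.map τ.toEmbedding).map ρ.toEmbedding) := by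
          gcongr with ρ _ σ _ τ _
          rw [map_union]
          exact hbb _ _
      _ = ∑ ρ : Equiv.Perm α, (M * avoidP B A) * (M * avoidP B C) := by
          apply sum_congr rfl
          intro ρ _
          rw [← sum_mul_sum, hre, hre]
      _ = _ := by
        rw [sum_const, nsmul_eq_mul, card_univ]
  have h2 : M * (M * (M * avoidP B D)) ≤ ∑ ρ : Equiv.Perm α, ∑ σ : Equiv.Perm α, ∑ τ : Equiv.Perm α,
      b ((A.map σ.toEmbedding ∪ C.map τ.toEmbedding).map ρ.toEmbedding) := by
    rw [sum_comm]
    have : M * (M * (M * avoidP B D)) = ∑ σ : Equiv.Perm α, ∑ τ : Equiv.Perm α, M * avoidP B D := by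
      simp only [sum_const, nsmul_eq_mul, card_univ, hM]
    rw [this]
    apply sum_le_sum
    intro σ _
    rw [sum_comm]
    apply sum_le_sum
    intro τ _
    rw [hdef]
    apply mul_le_mul_of_nonneg_left _ hMp.le
    apply avoidP_mono B hB
    refine (card_union_le _ _).trans ?_
    rw [card_map, card_map]; exact h
  have h3 := h2.trans h1
  have : 0 < M * (M * M) := by positivity
  refine le_of_mul_le_mul_left ?_ this
  calc _ = _ := by ring
    _ ≤ _ := h3
    _ = _ := by ring

lemma avoidP_pow (B : Finset α → Prop) (hB : ∀ S T, S ⊆ T → B T → B S) (Q : Finset α) (k : ℕ)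
    (D : Finset α) (h : k * Q.card ≤ D.card) : avoidP B D ≤ avoidP B Q ^ k := by
  induction k generalizing D with
  | zero => simpa using avoidP_le_one B D
  | succ k ih =>
    obtain ⟨D', _, hD'⟩ := exists_subset_card_eq (s := D) (n := k * Q.card) (by
      refine le_trans ?_ h; gcongr; omega)
    have h1 := avoidP_mul B hB (A := D') (C := Q) (D := D) (by rw [hD']; linarith [h, add_mul k 1 Q.card])
    rw [pow_succ]
    exact h1.trans (mul_le_mul_of_nonneg_right (ih D' hD'.ge) (avoidP_nonneg _ _))

lemma avoidP_count (B : Finset α → Prop) [DecidablePred B] (Q : Finset α) :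
    (((univ.powersetCard Q.card).filter B).card : ℝ) =
      (Fintype.card α).choose Q.card * avoidP B Q := by
  set M : ℝ := ((Fintype.card (Equiv.Perm α) : ℕ) : ℝ) with hM
  have hMp : 0 < M := permcard_pos
  have h1 : ∑ C ∈ (univ : Finset α).powersetCard Q.card, M * avoidP B C =
      (Fintype.card α).choose Q.card * (M * avoidP B Q) := by
    rw [← card_univ, ← card_powersetCard, ← nsmul_eq_mul, ← sum_const]
    apply sum_congr rfl
    intro C hC
    rw [avoidP_eq B (mem_powersetCard.1 hC).2]
  have h2 : ∑ C ∈ (univ : Finset α).powersetCard Q.card, M * avoidP B C =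
      M * (((univ.powersetCard Q.card).filter B).card : ℝ) := by
    have : ∀ C, M * avoidP B C = ∑ σ : Equiv.Perm α, if B (C.map σ.toEmbedding) then (1:ℝ) else 0 := by
      intro C
      unfold avoidP
      rw [mul_div_cancel₀ _ hMp.ne']
      congr!
    simp only [this]
    rw [sum_comm, hM, ← card_univ, ← nsmul_eq_mul, ← sum_const]
    apply sum_congr rfl
    intro σ _
    rw [← sum_boole]
    refine sum_bij' (fun C _ => C.map σ.toEmbedding) (fun C _ => C.map σ.symm.toEmbedding) ?_ ?_ ?_ ?_ ?_
    · intro C hC; simpa [mem_powersetCard] using hC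
    · intro C hC; simpa [mem_powersetCard] using hC
    · intro C _; ext x; simp
    · intro C _; ext x; simp
    · intro C _; rfl
  rw [h1] at h2
  have : M * (((univ.powersetCard Q.card).filter B).card : ℝ) = M * ((Fintype.card α).choose Q.card * avoidP B Q) := by
    rw [← h2]; ring
  exact mul_left_cancel₀ hMp.ne' this

lemma spread_main (I : Finset ι) (f : ι → Finset α) (m q k L : ℕ) (β lam : ℝ) (hβ : 0 ≤ β)
    (hI : I.Nonempty) (hf : ∀ i ∈ I, (f i).card = m)
    (hs : ∀ h : Finset α, ((I.filter (fun i => h ⊆ f i)).card : ℝ) ≤ I.card * β ^ h.card)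
    (hL : L ≤ Fintype.card α) (hk : k * q ≤ L) (hk1 : 1 ≤ k) (hm : 2 * m ≤ q)
    (hlam : lam ≤ k) (hδ : m * (2 * Fintype.card α / q * β) ≤ 1 / 4) :
    ((Fintype.card α).choose L : ℝ) * (1 - Real.exp (-lam)) ≤
     ((univ.powersetCard L).filter (fun T => ∃ i ∈ I, f i ⊆ T)).card := by
  set N := Fintype.card α with hN
  have hqN : q ≤ N := by
    have : 1 * q ≤ k * q := by gcongr
    omega
  set B : Finset α → Prop := fun T => ¬ ∃ i ∈ I, f i ⊆ T with hBdef
  haveI : DecidablePred B := Classical.decPred _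
  have hB : ∀ S T, S ⊆ T → B T → B S := by
    intro S T h hT ⟨i, hi, hi2⟩
    exact hT ⟨i, hi, hi2.trans h⟩
  obtain ⟨Q, _, hQ⟩ := exists_subset_card_eq (s := (univ : Finset α)) (n := q) (by rwa [card_univ])
  obtain ⟨D, _, hD⟩ := exists_subset_card_eq (s := (univ : Finset α)) (n := L) (by rwa [card_univ])
  have hsplit : ∀ a : ℕ, (((univ.powersetCard a).filter (fun T => ∃ i ∈ I, f i ⊆ T)).card : ℝ) +
      ((univ.powersetCard a).filter B).card = N.choose a := by
    intro a
    have := card_filter_add_card_filter_not (s := (univ : Finset α).powersetCard a) (fun T => ∃ i ∈ I, f i ⊆ T)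
    rw [card_powersetCard, card_univ] at this
    rw [← this]
    push_cast
    congr!
  have hcq := avoidP_count B Q
  have hcL := avoidP_count B D
  rw [hQ] at hcq
  rw [hD] at hcL
  have hpow := avoidP_pow B hB Q k D (by rw [hQ, hD]; exact hk)
  have hsm := second_moment I f m q β hβ hI hf hs hqN hm
  have hNq : (0:ℝ) < N.choose q := by exact_mod_cast Nat.choose_pos hqN
  have hNL : (0:ℝ) < N.choose L := by exact_mod_cast Nat.choose_pos hL
  have hpQ : avoidP B Q ≤ Real.exp (-1) := by
    have e1 := hsplit q
    rw [hcq] at e1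
    have e2 : (((univ.powersetCard q).filter (fun T => ∃ i ∈ I, f i ⊆ T)).card : ℝ) =
      N.choose q * (1 - avoidP B Q) := by linarith
    rw [e2, mul_assoc] at hsm
    have e3 : 1 ≤ (1 - avoidP B Q) * (1 + 2 * N / q * β) ^ m := by
      refine le_of_mul_le_mul_left ?_ hNq
      rw [mul_one]; exact hsm
    have e4 : (1 + 2 * N / q * β) ^ m ≤ Real.exp (1/4) := by
      have : 1 + 2 * N / q * β ≤ Real.exp (2 * N / q * β) := by
        rw [add_comm]; exact Real.add_one_le_exp _
      calc _ ≤ Real.exp (2 * N / q * β) ^ m := by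
            apply pow_le_pow_left₀ (by positivity) this
        _ = Real.exp (m * (2 * N / q * β)) := by rw [Real.exp_nat_mul]
        _ ≤ _ := Real.exp_le_exp.2 hδ
    have e5 : 1 ≤ (1 - avoidP B Q) * Real.exp (1/4) :=
      e3.trans (mul_le_mul_of_nonneg_left e4 (by linarith [avoidP_le_one B Q]))
    have e6 : Real.exp (-(1/4)) ≤ 1 - avoidP B Q := by
      rw [Real.exp_neg, inv_le_iff_one_le_mul₀ (Real.exp_pos _)]; exact e5
    have e7 := Real.add_one_le_exp (-(1/4) : ℝ)
    have e8 : (1:ℝ)/4 ≤ Real.exp (-1) := by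
      have := Real.exp_one_lt_d9
      rw [Real.exp_neg, ← one_div]
      apply one_div_le_one_div_of_le (Real.exp_pos _); linarith
    linarith
  have hpD : avoidP B D ≤ Real.exp (-lam) := by
    calc _ ≤ _ := hpow
      _ ≤ Real.exp (-1) ^ k := pow_le_pow_left₀ (avoidP_nonneg _ _) hpQ k
      _ = Real.exp (-k) := by rw [← Real.exp_nat_mul]; congr 1; ring
      _ ≤ _ := Real.exp_le_exp.2 (by linarith)
  have e1 := hsplit L
  rw [hcL] at e1
  nlinarith


lemma rhoR_le_pow (N q : ℕ) (hq : q ≤ N) (j : ℕ) (hj : j ≤ q) :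
    rhoR N q j ≤ ((q:ℝ) / N) ^ j := by
  induction j with
  | zero => simp [rhoR]
  | succ j ih =>
    have ih := ih (by omega)
    rw [rhoR_succ N q j hq (by omega), pow_succ]
    have hr : ((j + 1 : ℕ):ℝ) ≤ q := by exact_mod_cast hj
    have hqN : (q:ℝ) ≤ N := by exact_mod_cast hq
    have hj0 : (0:ℝ) ≤ j := by positivity
    push_cast at hr
    apply mul_le_mul ih
    · rw [div_le_div_iff₀ (by linarith) (by linarith)]
      nlinarith
    · apply div_nonneg <;> linarith
    · positivity

lemma choose_ratio (N q j : ℕ) (hq : q ≤ N) (hj : j ≤ q) :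
    ((N - j).choose (q - j) : ℝ) = N.choose q * rhoR N q j := by
  unfold rhoR
  have := Nat.choose_mul (n := N) (k := q) (s := j) hj
  have p2 : (0:ℝ) < N.choose j := by
    exact_mod_cast Nat.choose_pos (by omega)
  field_simp
  rw [mul_comm]
  exact_mod_cast this.symm

lemma exists_gen (n m : ℕ) (hmn : m ≤ n) (r : ℝ) (hr : 1 < r) (U : Finset (Finset ℕ)) (hU : U.Nonempty)
    (hUm : U ⊆ (Finset.Icc 1 n).powersetCard m) :
    ∃ g : Finset ℕ, g ⊆ Finset.Icc 1 n ∧ g.card ≤ m ∧ (U.filter (fun s => g ⊆ s)).Nonempty ∧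
      (g.card : ℝ) ≤ sparsity n m U / Real.log r ∧
      ∀ h : Finset ℕ, h ⊆ Finset.Icc 1 n \ g →
        ((U.filter (fun s => g ∪ h ⊆ s)).card : ℝ) ≤
          (U.filter (fun s => g ⊆ s)).card * (((m - g.card : ℕ) : ℝ) * r / ((n - g.card : ℕ):ℝ)) ^ h.card := by
  have hr0 : 0 < r := by linarith
  set φ : Finset ℕ → ℝ := fun g => ((U.filter (fun s => g ⊆ s)).card : ℝ) /
    ((n - g.card).choose (m - g.card) * r ^ g.card) with hφ
  obtain ⟨g, hg, hmax⟩ := exists_max_image (Finset.Icc 1 n).powerset φ ⟨∅, by simp⟩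
  rw [mem_powerset] at hg
  have hUc : (0:ℝ) < U.card := by exact_mod_cast hU.card_pos
  have hC0 : (0:ℝ) < n.choose m := by exact_mod_cast Nat.choose_pos hmn
  have h0 : φ ∅ = U.card / n.choose m := by simp [hφ]
  have h0g := hmax ∅ (by simp)
  rw [h0] at h0g
  have hφg : 0 < φ g := lt_of_lt_of_le (by positivity) h0g
  have hne : (U.filter (fun s => g ⊆ s)).Nonempty := by
    rw [nonempty_iff_ne_empty]
    intro he
    simp [hφ, he] at hφg
  have hUs : ∀ s ∈ U, s ⊆ Finset.Icc 1 n ∧ s.card = m := fun s hs => mem_powersetCard.1 (hUm hs)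
  have hgm : g.card ≤ m := by
    obtain ⟨s, hs⟩ := hne
    rw [mem_filter] at hs
    rw [← (hUs s hs.1).2]
    exact card_le_card hs.2
  have hCg : (0:ℝ) < (n - g.card).choose (m - g.card) := by
    exact_mod_cast Nat.choose_pos (by omega)
  refine ⟨g, hg, hgm, hne, ?_, ?_⟩
  · -- size of g
    have hle : ((U.filter (fun s => g ⊆ s)).card : ℝ) ≤ (n - g.card).choose (m - g.card) := by
      have : (U.filter (fun s => g ⊆ s)).card ≤ ((Finset.Icc 1 n \ g).powersetCard (m - g.card)).card := by
        apply card_le_card_of_injOn (fun s => s \ g)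
        · intro s hs
          have hs := mem_filter.1 (mem_coe.1 hs)
          rw [mem_coe, mem_powersetCard]
          exact ⟨sdiff_subset_sdiff (hUs s hs.1).1 (le_refl g), by rw [card_sdiff_of_subset hs.2, (hUs s hs.1).2]⟩
        · intro s hs t ht hst
          have hs := mem_filter.1 (mem_coe.1 hs)
          have ht := mem_filter.1 (mem_coe.1 ht)
          rw [← sdiff_union_of_subset hs.2, ← sdiff_union_of_subset ht.2]
          simp only at hst
          rw [hst]
      rw [card_powersetCard, card_sdiff_of_subset hg, Nat.card_Icc, Nat.add_sub_cancel] at this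
      exact_mod_cast this
    have h1 : φ g ≤ 1 / r ^ g.card := by
      rw [hφ]
      simp only
      rw [div_le_div_iff₀ (by positivity) (by positivity), one_mul]
      gcongr
    have h2 := h0g.trans h1
    rw [le_div_iff₀ (Real.log_pos hr)]
    unfold sparsity
    have h3 := Real.log_le_log (by positivity) h2
    rw [Real.log_div hUc.ne' hC0.ne', Real.log_div one_ne_zero (by positivity), Real.log_one, Real.log_pow] at h3
    linarith
  · intro h hh
    have hdis : Disjoint g h := by
      rw [disjoint_comm]
      exact disjoint_of_subset_left hh sdiff_disjoint
    have hcard : (g ∪ h).card = g.card + h.card := card_union_of_disjoint hdis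
    by_cases hj : h.card ≤ m - g.card
    · have hm2 := hmax (g ∪ h) (mem_powerset.2 (union_subset hg (hh.trans sdiff_subset)))
      simp only [hφ] at hm2
      rw [hcard, ← Nat.sub_sub, ← Nat.sub_sub, choose_ratio _ _ _ (by omega) hj] at hm2
      have hρ := rhoR_le_pow (n - g.card) (m - g.card) (by omega) h.card hj
      have hρ0 : 0 < rhoR (n - g.card) (m - g.card) h.card := by
        unfold rhoR
        apply div_pos <;> exact_mod_cast Nat.choose_pos (by omega)
      rw [div_le_div_iff₀ (by positivity) (by positivity)] at hm2
      have hp : 0 < ((n - g.card).choose (m - g.card) : ℝ) * r ^ g.card := by positivity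
      have h4 : ((U.filter (fun s => g ∪ h ⊆ s)).card : ℝ) ≤ (U.filter (fun s => g ⊆ s)).card *
          (rhoR (n - g.card) (m - g.card) h.card * r ^ h.card) := by
        refine le_of_mul_le_mul_right ?_ hp
        refine hm2.trans (le_of_eq ?_)
        rw [pow_add]; ring
      refine h4.trans ?_
      apply mul_le_mul_of_nonneg_left _ (Nat.cast_nonneg _)
      rw [mul_div_right_comm, mul_pow]
      apply mul_le_mul_of_nonneg_right hρ (by positivity)
    · have : (U.filter (fun s => g ∪ h ⊆ s)) = ∅ := by
        rw [filter_eq_empty_iff]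
        intro s hs hsub
        have := card_le_card hsub
        rw [(hUs s hs).2] at this
        omega
      rw [this]
      simp only [card_empty, Nat.cast_zero]
      positivity

lemma ext_gen (n m l q k : ℕ) (r lam : ℝ) (hr : 0 ≤ r) (U : Finset (Finset ℕ))
    (hUm : U ⊆ (Finset.Icc 1 n).powersetCard m) (g : Finset ℕ) (hg : g ⊆ Finset.Icc 1 n)
    (hgm : g.card ≤ m) (hne : (U.filter (fun s => g ⊆ s)).Nonempty)
    (hs : ∀ h : Finset ℕ, h ⊆ Finset.Icc 1 n \ g →
        ((U.filter (fun s => g ∪ h ⊆ s)).card : ℝ) ≤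
          (U.filter (fun s => g ⊆ s)).card * (((m - g.card : ℕ) : ℝ) * r / ((n - g.card : ℕ):ℝ)) ^ h.card)
    (hl : l ≤ n) (hml : m < l) (hk : k * q ≤ l - g.card) (hk1 : 1 ≤ k) (hm : 2 * m ≤ q) (hlam : lam ≤ k)
    (hδ : 2 * (m:ℝ) ^ 2 * r / q ≤ 1 / 4) :
    ((extFam n (U.filter (fun s => g ⊆ s)) l).card : ℝ) ≥
            ((n - g.card).choose (l - g.card) : ℝ) * (1 - Real.exp (-lam)) := by
  classical
  set S := Finset.Icc 1 n \ g with hS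
  have hUs : ∀ s ∈ U, s ⊆ Finset.Icc 1 n ∧ s.card = m := fun s hs => mem_powersetCard.1 (hUm hs)
  have hcardS : Fintype.card {x // x ∈ S} = n - g.card := by
    rw [Fintype.card_coe, hS, card_sdiff_of_subset hg, Nat.card_Icc, Nat.add_sub_cancel]
  have hfS : ∀ s ∈ U.filter (fun s => g ⊆ s), s.filter (· ∈ S) = s \ g := by
    intro s hs
    have hs := mem_filter.1 hs
    ext x
    simp only [mem_filter, hS, mem_sdiff]
    constructor
    · rintro ⟨h1, h2, h3⟩; exact ⟨h1, h3⟩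
    · rintro ⟨h1, h3⟩; exact ⟨h1, (hUs s hs.1).1 h1, h3⟩
  have hN0 : (0:ℝ) < ((n - g.card : ℕ) : ℝ) := by exact_mod_cast (by omega : 0 < n - g.card)
  have hq0 : (0:ℝ) ≤ q := Nat.cast_nonneg _
  have main := spread_main (α := {x // x ∈ S}) (U.filter (fun s => g ⊆ s))
    (fun s => s.subtype (· ∈ S)) (m - g.card) q k (l - g.card)
    (((m - g.card : ℕ) : ℝ) * r / ((n - g.card : ℕ):ℝ)) lam (by positivity) hne
    (by
      intro s hs'
      rw [card_subtype, hfS s hs']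
      have hs' := mem_filter.1 hs'
      rw [card_sdiff_of_subset hs'.2, (hUs s hs'.1).2])
    (by
      intro h
      have h1 := hs (h.map (Function.Embedding.subtype _)) (by
        intro x hx
        rw [mem_map] at hx
        obtain ⟨y, _, rfl⟩ := hx
        exact y.2)
      rw [card_map] at h1
      refine le_trans ?_ h1
      norm_cast
      apply card_le_card
      intro s hs'
      rw [mem_filter, mem_filter] at hs'
      rw [mem_filter]
      refine ⟨hs'.1.1, union_subset hs'.1.2 ?_⟩
      intro x hx
      rw [mem_map] at hx
      obtain ⟨y, hy, rfl⟩ := hx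
      exact mem_subtype.1 (hs'.2 hy))
    (by rw [hcardS]; omega) hk hk1 (by omega) hlam
    (by
      rw [hcardS]
      refine le_trans (le_of_eq ?_) (le_trans (?_ : 2 * ((m - g.card : ℕ):ℝ) ^ 2 * r / q ≤ _) hδ)
      · field_simp
      · gcongr
        omega)
  rw [hcardS] at main
  refine main.trans ?_
  norm_cast
  apply card_le_card_of_injOn (fun T => g ∪ T.map (Function.Embedding.subtype _))
  · intro T hT
    have hT := mem_filter.1 (mem_coe.1 hT)
    obtain ⟨hT1, s, hs1, hs2⟩ := hT
    have hTS : T.map (Function.Embedding.subtype (· ∈ S)) ⊆ S := by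
      intro x hx
      rw [mem_map] at hx
      obtain ⟨y, _, rfl⟩ := hx
      exact y.2
    rw [mem_coe]
    unfold extFam
    rw [mem_filter, mem_powersetCard]
    refine ⟨⟨union_subset hg (hTS.trans sdiff_subset), ?_⟩, s, hs1, ?_⟩
    · rw [card_union_of_disjoint, card_map, (mem_powersetCard.1 hT1).2]
      · omega
      · rw [disjoint_comm]
        exact disjoint_of_subset_left hTS sdiff_disjoint
    · intro x hx
      by_cases hxg : x ∈ g
      · exact mem_union_left _ hxg
      · apply mem_union_right
        have hxS : x ∈ S := mem_sdiff.2 ⟨(hUs s (mem_filter.1 hs1).1).1 hx, hxg⟩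
        rw [mem_map]
        exact ⟨⟨x, hxS⟩, hs2 (mem_subtype.2 hx), rfl⟩
  · intro T _ T' _ hTT
    simp only at hTT
    have key : ∀ (A A' : Finset {x // x ∈ S}), g ∪ A.map (Function.Embedding.subtype _) = g ∪ A'.map (Function.Embedding.subtype _) → A ⊆ A' := by
      intro A A' hA y hy
      have : (y : ℕ) ∈ g ∪ A'.map (Function.Embedding.subtype _) := by
        rw [← hA]
        exact mem_union_right _ (mem_map.2 ⟨y, hy, rfl⟩)
      rcases mem_union.1 this with h | h
      · exact absurd h (mem_sdiff.1 y.2).2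
      · obtain ⟨z, hz, hzy⟩ := mem_map.1 h
        have : z = y := Subtype.ext hzy
        exact this ▸ hz
    exact (key _ _ hTT).antisymm (key _ _ hTT.symm)

end helper

theorem stmt_15 :
    ∃ ε₀ : ℝ, 0 < ε₀ ∧ ε₀ < 1 ∧ ∀ ε : ℝ, 0 < ε → ε ≤ ε₀ →
      ∃ lam₀ : ℝ, 1 ≤ lam₀ ∧ ∃ n₀ : ℕ,
        ∀ n : ℕ, n₀ ≤ n → ∀ m : ℕ, 1 ≤ m →
        ∀ lam : ℝ, lam₀ ≤ lam → (m : ℝ) ^ 2 * lam ≤ ε * n →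
        ∀ l : ℕ, (m : ℝ) ^ 2 * lam / ε < l → l ≤ n →
        ∀ U : Finset (Finset ℕ), U.Nonempty → U ⊆ (Finset.Icc 1 n).powersetCard m →
        ∃ g : Finset ℕ, g ⊆ Finset.Icc 1 n ∧
          (g.card : ℝ) ≤ sparsity n m U / Real.log (ε * l / ((m : ℝ) ^ 2 * lam)) ∧
          ((extFam n (U.filter (fun s => g ⊆ s)) l).card : ℝ) ≥
            ((n - g.card).choose (l - g.card) : ℝ) * (1 - Real.exp (-lam)) := by
  refine ⟨1/64, by norm_num, by norm_num, ?_⟩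
  intro ε hε hε0
  refine ⟨1, le_rfl, 0, ?_⟩
  intro n _ m hm lam hlam _ l hl hln U hU hUm
  have hm1 : (1:ℝ) ≤ m := by exact_mod_cast hm
  have hmm : (m:ℝ) ≤ (m:ℝ)^2 := by nlinarith
  have hm2 : (1:ℝ) ≤ (m:ℝ)^2 := by nlinarith
  have hpos : 0 < (m:ℝ)^2 * lam := by positivity
  have hl' : (m:ℝ)^2 * lam < ε * l := by
    rw [div_lt_iff₀ hε] at hl; linarith
  have hl64 : 64 * ((m:ℝ)^2 * lam) < l := by
    have : ε * (l:ℝ) ≤ 1/64 * l := mul_le_mul_of_nonneg_right hε0 (Nat.cast_nonneg _)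
    linarith
  have hmlR : 64 * (m:ℝ) < l := by nlinarith
  have hlamlR : 64 * lam < l := by nlinarith
  have hml : 64 * m < l := by exact_mod_cast hmlR
  have hr : 1 < ε * l / ((m : ℝ) ^ 2 * lam) := by
    rw [lt_div_iff₀ hpos]; linarith
  obtain ⟨g, hg, hgm, hne, hsz, hs⟩ := exists_gen n m (by omega) _ hr U hU hUm
  refine ⟨g, hg, hsz, ?_⟩
  set k := ⌈lam⌉₊ with hk
  have hkl : lam ≤ k := Nat.le_ceil lam
  have hk1 : (1:ℝ) ≤ k := by linarith
  have hk2 : (k:ℝ) ≤ 2 * lam := by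
    have := Nat.ceil_lt_add_one (by linarith : 0 ≤ lam)
    linarith
  have hk1' : 1 ≤ k := by exact_mod_cast hk1
  set q := (l - g.card) / k with hq
  have hkq : k * q ≤ l - g.card := Nat.mul_div_le _ _
  have hgR : (g.card : ℝ) ≤ m := by exact_mod_cast hgm
  have hqlow : (l:ℝ) ≤ 8 * lam * q := by
    have h1 : l - g.card < k * (q + 1) := by
      have := Nat.lt_mul_div_succ (l - g.card) (by omega : 0 < k)
      exact this
    have h2 : l < k * (q+1) + g.card := by omega
    have h3 : (l:ℝ) < k * (q+1) + g.card := by exact_mod_cast h2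
    have h4 : (k:ℝ) * q ≤ 2 * lam * q := mul_le_mul_of_nonneg_right hk2 (Nat.cast_nonneg _)
    nlinarith
  have hlam0 : 0 < lam := by linarith
  have hqm : 8 * (m:ℝ) ≤ q := by
    have : 64 * (m * lam) ≤ 8 * lam * q := by nlinarith
    have h8 : 0 < 8 * lam := by positivity
    refine le_of_mul_le_mul_left ?_ h8
    linarith
  have hq0 : (0:ℝ) < q := by linarith
  have hqm' : 8 * m ≤ q := by exact_mod_cast hqm
  refine ext_gen n m l q k _ lam (by linarith) U hUm g hg hgm hne hs hln (by omega) hkq hk1' (by omega) hkl ?_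
  have hmne : (m:ℝ) ≠ 0 := by linarith
  have : 2 * (m:ℝ) ^ 2 * (ε * l / ((m : ℝ) ^ 2 * lam)) / q = 2 * ε * l / (lam * q) := by
    field_simp
  rw [this, div_le_iff₀ (by positivity)]
  nlinarith [mul_le_mul_of_nonneg_left hqlow hε.le, mul_pos hlam0 hq0]
end

section
/- There exists ε₀ ∈ (0,1) such that for every ε ∈ (0, ε₀] there exist a real λ₀ ≥ 1 and a natural number n₀ with the following property: for every n ≥ n₀, every m ≥ 1, every real λ with λ₀ ≤ λ and m²·λ ≤ ε·n, every integer l with m²·λ/ε < l ≤ n, and every nonempty family U of m-element subsets of [n], there exist a set g ⊆ [n] with |g| ≤ κ(U) / ln( ε·l/(m²·λ) ) and a family Y of l-element subsets of [n] with |Y| ≥ C(n, l)·(1 − e^{−λ}) such that for every y ∈ Y there exists s ∈ U with g ⊆ s ⊆ g ∪ y. -/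
section
open Finset

/-- Fraction of `r`-sets satisfying `bad`. -/
noncomputable def badFrac {α : Type*} [Fintype α] (bad : Finset α → Prop) (r : ℕ) : ℝ :=
  open Classical in
  (((univ : Finset α).powersetCard r).filter bad).card / ((Fintype.card α).choose r : ℝ)

lemma badFrac_nonneg {α : Type*} [Fintype α] (bad : Finset α → Prop) (r : ℕ) :
    0 ≤ badFrac bad r := by
  unfold badFrac; positivity

lemma badFrac_le_one {α : Type*} [Fintype α] (bad : Finset α → Prop) (r : ℕ) :
    badFrac bad r ≤ 1 := by
  classical
  unfold badFrac
  apply div_le_one_of_le₀ _ (by positivity)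
  have := card_filter_le ((univ : Finset α).powersetCard r) bad
  rw [card_powersetCard, card_univ] at this
  exact_mod_cast this

lemma badFrac_antitone {α : Type*} [Fintype α] (bad : Finset α → Prop)
    (hb : ∀ s t, s ⊆ t → bad t → bad s) : Antitone (badFrac bad) := by
  classical
  apply antitone_nat_of_succ_le
  intro r
  have h1 := local_lubell_yamamoto_meshalkin_inequality_div (𝕜 := ℝ) (r := r + 1)
    (𝒜 := ((univ : Finset α).powersetCard (r + 1)).filter bad) (by omega)
    (by
      intro s hs
      simp only [coe_filter, mem_powersetCard, Set.mem_ofPred_eq] at hs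
      exact hs.1.2)
  unfold badFrac
  refine le_trans (by convert h1) ?_
  rw [Nat.add_sub_cancel]
  gcongr
  intro s hs
  rw [mem_shadow_iff] at hs
  obtain ⟨t, ht, a, ha, rfl⟩ := hs
  simp only [mem_filter, mem_powersetCard, subset_univ, true_and] at ht ⊢
  exact ⟨by rw [card_erase_of_mem ha]; omega, hb _ _ (erase_subset _ _) ht.2⟩

/-- number of permutations carrying `S` to a bad set. -/
noncomputable def permBad {α : Type*} [Fintype α] [DecidableEq α] (bad : Finset α → Prop)
    (S : Finset α) : ℝ :=
  open Classical in
  ∑ σ : Equiv.Perm α, if bad (S.map σ.toEmbedding) then 1 else 0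

lemma permBad_map {α : Type*} [Fintype α] [DecidableEq α] (bad : Finset α → Prop)
    (S : Finset α) (τ : Equiv.Perm α) : permBad bad (S.map τ.toEmbedding) = permBad bad S := by
  classical
  unfold permBad
  refine Fintype.sum_equiv (Equiv.mulRight τ) _ _ ?_
  intro σ
  simp only [Equiv.coe_mulRight, map_map]
  rfl

lemma sum_map_perm {α : Type*} [Fintype α] [DecidableEq α] (r : ℕ) (σ : Equiv.Perm α)
    (f : Finset α → ℝ) :
    ∑ S ∈ (univ : Finset α).powersetCard r, f (S.map σ.toEmbedding)
      = ∑ S ∈ (univ : Finset α).powersetCard r, f S := by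
  refine sum_nbij' (fun S => S.map σ.toEmbedding) (fun S => S.map σ.symm.toEmbedding) ?_ ?_ ?_ ?_ ?_
  · intro S hS; simpa using hS
  · intro S hS; simpa using hS
  · intro S _; ext x; simp
  · intro S _; ext x; simp
  · intro S _; rfl

lemma permBad_eq {α : Type*} [Fintype α] [DecidableEq α] (bad : Finset α → Prop)
    (S : Finset α) :
    permBad bad S = (Fintype.card (Equiv.Perm α) : ℝ) * badFrac bad S.card := by
  classical
  have hpos : (0 : ℝ) < (Fintype.card α).choose S.card := by
    exact_mod_cast Nat.choose_pos (card_le_univ S)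
  have h1 : ∑ T ∈ (univ : Finset α).powersetCard S.card, permBad bad T
      = ((Fintype.card α).choose S.card : ℝ) * permBad bad S := by
    rw [sum_congr rfl (g := fun _ => permBad bad S)]
    · simp
    · intro T hT
      obtain ⟨τ, hτ⟩ := Equiv.Perm.exists_map_finset_eq S T (mem_powersetCard.1 hT).2.symm
      rw [← hτ, permBad_map]
  have h2 : ∑ T ∈ (univ : Finset α).powersetCard S.card, permBad bad T
      = (Fintype.card (Equiv.Perm α) : ℝ) *
        (((univ : Finset α).powersetCard S.card).filter bad).card := by
    unfold permBad
    rw [sum_comm]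
    rw [sum_congr rfl (fun σ _ => sum_map_perm S.card σ (fun T => if bad T then (1:ℝ) else 0))]
    simp
  unfold badFrac
  rw [h1] at h2
  field_simp
  rw [mul_comm, h2]

lemma badFrac_add {α : Type*} [Fintype α] (bad : Finset α → Prop)
    (hb : ∀ s t, s ⊆ t → bad t → bad s) (a b : ℕ) :
    badFrac bad (a + b) ≤ badFrac bad a * badFrac bad b := by
  classical
  by_cases hab : Fintype.card α < a + b
  · have : badFrac bad (a + b) = 0 := by
      unfold badFrac; rw [Nat.choose_eq_zero_of_lt hab]; simp
    rw [this]
    exact mul_nonneg (badFrac_nonneg _ _) (badFrac_nonneg _ _)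
  have hca : (0 : ℝ) < (Fintype.card α).choose a := by
    exact_mod_cast Nat.choose_pos (by omega)
  have hcb : (0 : ℝ) < (Fintype.card α).choose b := by
    exact_mod_cast Nat.choose_pos (by omega)
  have hN : (0 : ℝ) < Fintype.card (Equiv.Perm α) := by
    exact_mod_cast Fintype.card_pos
  set PA := (univ : Finset α).powersetCard a with hPA
  set PB := (univ : Finset α).powersetCard b with hPB
  have h1 : ∑ A ∈ PA, ∑ B ∈ PB, permBad bad (A ∪ B)
      = (Fintype.card (Equiv.Perm α) : ℝ) *
        ∑ A ∈ PA, ∑ B ∈ PB, (if bad (A ∪ B) then (1:ℝ) else 0) := by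
    unfold permBad
    have : ∀ A ∈ PA, ∑ B ∈ PB, ∑ σ : Equiv.Perm α,
        (if bad ((A ∪ B).map σ.toEmbedding) then (1:ℝ) else 0)
        = ∑ σ : Equiv.Perm α, ∑ B ∈ PB,
          (if bad (A.map σ.toEmbedding ∪ B) then (1:ℝ) else 0) := by
      intro A _
      rw [sum_comm]
      refine sum_congr rfl fun σ _ => ?_
      rw [hPB, ← sum_map_perm b σ (fun B => if bad (A.map σ.toEmbedding ∪ B) then (1:ℝ) else 0)]
      simp only [map_union]
    rw [sum_congr rfl this, sum_comm]
    rw [sum_congr rfl (fun σ _ => sum_map_perm a σ (fun A => ∑ B ∈ PB,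
          (if bad (A ∪ B) then (1:ℝ) else 0)))]
    simp [hPA]
  have h2 : ∑ A ∈ PA, ∑ B ∈ PB, (if bad (A ∪ B) then (1:ℝ) else 0)
      ≤ (PA.filter bad).card * (PB.filter bad).card := by
    have : ((PA.filter bad).card : ℝ) * (PB.filter bad).card
        = ∑ A ∈ PA, ∑ B ∈ PB, (if bad A then (1:ℝ) else 0) * (if bad B then (1:ℝ) else 0) := by
      rw [← sum_mul_sum]; simp
    rw [this]
    refine sum_le_sum fun A _ => sum_le_sum fun B _ => ?_
    by_cases h : bad (A ∪ B)
    · simp [h, hb _ _ subset_union_left h, hb _ _ subset_union_right h]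
    · rw [if_neg h]; positivity
  have h3 : ((Fintype.card α).choose a : ℝ) * ((Fintype.card α).choose b : ℝ) *
      ((Fintype.card (Equiv.Perm α) : ℝ) * badFrac bad (a + b))
      ≤ ∑ A ∈ PA, ∑ B ∈ PB, permBad bad (A ∪ B) := by
    calc _ = ∑ A ∈ PA, ∑ B ∈ PB, ((Fintype.card (Equiv.Perm α) : ℝ) * badFrac bad (a + b)) := by
          simp [hPA, hPB]; ring
      _ ≤ _ := by
          refine sum_le_sum fun A hA => sum_le_sum fun B hB => ?_
          rw [permBad_eq]
          refine mul_le_mul_of_nonneg_left ?_ hN.le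
          apply badFrac_antitone bad hb
          refine (card_union_le _ _).trans ?_
          rw [(mem_powersetCard.1 hA).2, (mem_powersetCard.1 hB).2]
  rw [h1] at h3
  have h4 : ((Fintype.card α).choose a : ℝ) * ((Fintype.card α).choose b : ℝ) *
      badFrac bad (a + b) ≤ (PA.filter bad).card * (PB.filter bad).card := by
    refine le_trans ?_ h2
    refine le_of_mul_le_mul_left ?_ hN
    linarith
  have e : badFrac bad a * badFrac bad b = ((PA.filter bad).card * (PB.filter bad).card : ℝ) /
      (((Fintype.card α).choose a : ℝ) * ((Fintype.card α).choose b : ℝ)) := by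
    unfold badFrac
    rw [div_mul_div_comm]
  rw [e, le_div_iff₀ (by positivity)]
  linarith

lemma badFrac_mul {α : Type*} [Fintype α] (bad : Finset α → Prop)
    (hb : ∀ s t, s ⊆ t → bad t → bad s) (q K : ℕ) :
    badFrac bad (K * q) ≤ badFrac bad q ^ K := by
  induction K with
  | zero => simpa using badFrac_le_one bad _
  | succ k ih =>
    rw [add_mul, one_mul, pow_succ]
    refine (badFrac_add bad hb _ _).trans ?_
    exact mul_le_mul_of_nonneg_right ih (badFrac_nonneg _ _)

/-- The ratio `(q - i) / (n - i)`. -/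
noncomputable def rho (n q i : ℕ) : ℝ := ((q - i : ℕ) : ℝ) / ((n - i : ℕ) : ℝ)

lemma rho_nonneg (n q i : ℕ) : 0 ≤ rho n q i := by unfold rho; positivity

lemma rho_anti {n q i j : ℕ} (hq : q ≤ n) (hij : i ≤ j) : rho n q j ≤ rho n q i := by
  by_cases hj : q ≤ j
  · have : rho n q j = 0 := by unfold rho; rw [Nat.sub_eq_zero_of_le hj]; simp
    rw [this]; exact rho_nonneg _ _ _
  push Not at hj
  unfold rho
  rw [Nat.cast_sub hj.le, Nat.cast_sub (by omega), Nat.cast_sub (by omega), Nat.cast_sub (by omega)]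
  have h1 : (j : ℝ) < q := by exact_mod_cast hj
  have h2 : (q : ℝ) ≤ n := by exact_mod_cast hq
  have h3 : (i : ℝ) ≤ j := by exact_mod_cast hij
  rw [div_le_div_iff₀ (by linarith) (by linarith)]
  nlinarith [mul_nonneg (sub_nonneg.2 h2) (sub_nonneg.2 h3)]

lemma choose_sub_eq {n q : ℕ} (hq : q ≤ n) (k : ℕ) (hk : k ≤ q) :
    ((n - k).choose (q - k) : ℝ) = n.choose q * ∏ i ∈ range k, rho n q i := by
  induction k with
  | zero => simp
  | succ k ih =>
    rw [prod_range_succ, ← mul_assoc, ← ih (by omega)]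
    have h := Nat.add_one_mul_choose_eq (n - (k + 1)) (q - (k + 1))
    have e1 : n - (k + 1) + 1 = n - k := by omega
    have e2 : q - (k + 1) + 1 = q - k := by omega
    rw [e1, e2] at h
    have h' : ((n - k : ℕ) : ℝ) * ((n - (k + 1)).choose (q - (k + 1)) : ℝ)
        = ((n - k).choose (q - k) : ℝ) * ((q - k : ℕ) : ℝ) := by exact_mod_cast h
    have hpos : (0 : ℝ) < ((n - k : ℕ) : ℝ) := by
      have : 0 < n - k := by omega
      exact_mod_cast this
    unfold rho
    rw [← mul_div_assoc, ← h']
    field_simp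

lemma card_superset {α : Type*} [Fintype α] [DecidableEq α] {q : ℕ} (hq : q ≤ Fintype.card α)
    (T : Finset α) :
    ((((univ : Finset α).powersetCard q).filter (T ⊆ ·)).card : ℝ)
      = (Fintype.card α).choose q * ∏ i ∈ range T.card, rho (Fintype.card α) q i := by
  by_cases h : T.card ≤ q
  · rw [card_filter_powersetCard_subset _ _ _ (subset_univ _) h, card_univ, choose_sub_eq hq _ h]
  · push Not at h
    rw [prod_eq_zero (i := q) (by simpa using h) (by unfold rho; simp), mul_zero]
    norm_cast
    rw [card_eq_zero, filter_eq_empty_iff]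
    intro y hy hT
    have := card_le_card hT
    rw [(mem_powersetCard.1 hy).2] at this
    omega

lemma rho_joint {n q m t : ℕ} (hq : q ≤ n) (hm : m < q) (ht : t ≤ m) :
    ∏ i ∈ range (m + (m - t)), rho n q i
      ≤ (∏ i ∈ range m, rho n q i) ^ 2 * ((n : ℝ) / ((q : ℝ) - m)) ^ t := by
  have hmq : (0 : ℝ) < (q : ℝ) - m := by
    have : (m : ℝ) < q := by exact_mod_cast hm
    linarith
  have hn : (0 : ℝ) < n := by
    have : 0 < n := by omega
    exact_mod_cast this
  have h0 : ∀ k, 0 ≤ ∏ i ∈ range k, rho n q i := fun k => prod_nonneg fun i _ => rho_nonneg _ _ _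
  rw [prod_range_add, sq, mul_assoc]
  refine mul_le_mul_of_nonneg_left ?_ (h0 _)
  have h1 : ∏ i ∈ range (m - t), rho n q (m + i) ≤ ∏ i ∈ range (m - t), rho n q i :=
    prod_le_prod (fun i _ => rho_nonneg _ _ _) fun i _ => rho_anti hq (by omega)
  refine h1.trans ?_
  have e : ∏ i ∈ range m, rho n q i
      = (∏ i ∈ range (m - t), rho n q i) * ∏ i ∈ range t, rho n q (m - t + i) := by
    rw [← prod_range_add]; congr 2; omega
  rw [e, mul_assoc]
  refine le_mul_of_one_le_right (h0 _) ?_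
  have h2 : (((q : ℝ) - m) / n) ^ t ≤ ∏ i ∈ range t, rho n q (m - t + i) := by
    calc (((q : ℝ) - m) / n) ^ t = ∏ i ∈ range t, (((q : ℝ) - m) / n) := by
          rw [prod_const, card_range]
      _ ≤ _ := by
        refine prod_le_prod (fun i _ => by positivity) fun i hi => ?_
        have hi' := mem_range.1 hi
        refine le_trans ?_ (rho_anti hq (show m - t + i ≤ m by omega))
        unfold rho
        rw [Nat.cast_sub hm.le, Nat.cast_sub (by omega)]
        have : (m : ℝ) < n := by
          have : m < n := by omega
          exact_mod_cast this
        have h0m : (0 : ℝ) ≤ m := by positivity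
        gcongr
        linarith
  calc (1 : ℝ) = (((q : ℝ) - m) / n) ^ t * ((n : ℝ) / ((q : ℝ) - m)) ^ t := by
        rw [← mul_pow, div_mul_div_cancel₀ hn.ne', div_self hmq.ne', one_pow]
    _ ≤ _ := by gcongr

lemma one_sub_badFrac {α : Type*} [Fintype α] (bad : Finset α → Prop)
    [DecidablePred fun y => ¬ bad y] {q : ℕ}
    (hq : q ≤ Fintype.card α) :
    1 - badFrac bad q = (((univ : Finset α).powersetCard q).filter (fun y => ¬ bad y)).card /
      (Fintype.card α).choose q := by
  classical
  have hP : (0 : ℝ) < (Fintype.card α).choose q := by exact_mod_cast Nat.choose_pos hq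
  have h1 := card_filter_add_card_filter_not (s := (univ : Finset α).powersetCard q) bad
  rw [card_powersetCard, card_univ] at h1
  unfold badFrac
  rw [eq_div_iff hP.ne', sub_mul, div_mul_cancel₀ _ hP.ne', one_mul, ← h1]
  push_cast
  rw [add_sub_cancel_left]

lemma second_moment_s16 {α : Type*} [Fintype α] [DecidableEq α] (V : Finset (Finset α)) (m q : ℕ)
    (hV : V.Nonempty) (hVm : ∀ s ∈ V, s.card = m) (hmq : m < q) (hq : q ≤ Fintype.card α)
    (β : ℝ)
    (hs : ∀ T : Finset α, ((V.filter (T ⊆ ·)).card : ℝ) ≤ V.card * β ^ T.card) :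
    1 ≤ (1 + (Fintype.card α : ℝ) / ((q : ℝ) - m) * β) ^ m *
      (1 - badFrac (fun y => ∀ s ∈ V, ¬ s ⊆ y) q) := by
  classical
  set n := Fintype.card α with hn
  set c : ℝ := (n : ℝ) / ((q : ℝ) - m) with hc
  have hmq' : (0 : ℝ) < (q : ℝ) - m := by
    have : (m : ℝ) < q := by exact_mod_cast hmq
    linarith
  have hn0 : (0 : ℝ) < n := by
    have : 0 < n := by omega
    exact_mod_cast this
  have hc0 : 0 ≤ c := by positivity
  have hP : (0 : ℝ) < n.choose q := by exact_mod_cast Nat.choose_pos hq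
  set R : ℝ := ∏ i ∈ range m, rho n q i with hR
  have hR0 : 0 < R := by
    refine prod_pos fun i hi => ?_
    have hi' := mem_range.1 hi
    unfold rho
    have h1 : 0 < q - i := by omega
    have h2 : 0 < n - i := by omega
    have h1' : (0 : ℝ) < (q - i : ℕ) := by exact_mod_cast h1
    have h2' : (0 : ℝ) < (n - i : ℕ) := by exact_mod_cast h2
    positivity
  have hV0 : (0 : ℝ) < V.card := by exact_mod_cast hV.card_pos
  set Y := (univ : Finset α).powersetCard q with hY
  set X : Finset α → ℝ := fun y => ∑ s ∈ V, if s ⊆ y then 1 else 0 with hX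
  have hcnt : ∀ T : Finset α, ∑ y ∈ Y, (if T ⊆ y then (1 : ℝ) else 0)
      = n.choose q * ∏ i ∈ range T.card, rho n q i := by
    intro T
    rw [← card_superset hq T]; simp [hY]
  have hEX : ∑ y ∈ Y, X y = V.card * (n.choose q * R) := by
    rw [hX, sum_comm, sum_congr rfl (g := fun _ => n.choose q * R)]
    · simp
    · intro s hs'
      rw [hcnt, hVm s hs']
  have hin : ∀ s ∈ V, ∑ s' ∈ V, c ^ (s ∩ s').card ≤ V.card * (1 + c * β) ^ m := by
    intro s hsV
    calc ∑ s' ∈ V, c ^ (s ∩ s').card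
        ≤ ∑ s' ∈ V, ∑ T ∈ s.powerset, (if T ⊆ s' then c ^ T.card else 0) := by
          refine sum_le_sum fun s' _ => ?_
          have := single_le_sum (s := s.powerset)
            (f := fun T => if T ⊆ s' then c ^ T.card else 0)
            (fun T _ => by positivity) (a := s ∩ s') (mem_powerset.2 inter_subset_left)
          simpa [inter_subset_right] using this
      _ = ∑ T ∈ s.powerset, c ^ T.card * (V.filter (T ⊆ ·)).card := by
          rw [sum_comm]
          refine sum_congr rfl fun T _ => ?_
          rw [← sum_filter, sum_const, nsmul_eq_mul, mul_comm]
      _ ≤ ∑ T ∈ s.powerset, c ^ T.card * (V.card * β ^ T.card) := by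
          refine sum_le_sum fun T _ => ?_
          exact mul_le_mul_of_nonneg_left (hs T) (by positivity)
      _ = V.card * ∑ T ∈ s.powerset, (c * β) ^ T.card * 1 ^ (s.card - T.card) := by
          rw [mul_sum]
          refine sum_congr rfl fun T _ => ?_
          rw [mul_pow, one_pow]; ring
      _ = _ := by
          rw [sum_pow_mul_eq_add_pow, hVm s hsV, add_comm]
  have hEX2 : ∑ y ∈ Y, X y ^ 2
      ≤ n.choose q * R ^ 2 * V.card * (V.card * (1 + c * β) ^ m) := by
    calc ∑ y ∈ Y, X y ^ 2
        = ∑ s ∈ V, ∑ s' ∈ V, ∑ y ∈ Y, (if s ∪ s' ⊆ y then (1 : ℝ) else 0) := by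
          have : ∀ y ∈ Y, X y ^ 2 = ∑ s ∈ V, ∑ s' ∈ V, (if s ∪ s' ⊆ y then (1 : ℝ) else 0) := by
            intro y _
            rw [hX, sq, sum_mul_sum]
            refine sum_congr rfl fun s _ => sum_congr rfl fun s' _ => ?_
            by_cases h1 : s ⊆ y <;> by_cases h2 : s' ⊆ y <;> simp [union_subset_iff, h1, h2]
          rw [sum_congr rfl this, sum_comm]
          refine sum_congr rfl fun s _ => ?_
          rw [sum_comm]
      _ ≤ ∑ s ∈ V, ∑ s' ∈ V, n.choose q * R ^ 2 * c ^ (s ∩ s').card := by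
          refine sum_le_sum fun s hs1 => sum_le_sum fun s' hs2 => ?_
          rw [hcnt, mul_assoc]
          refine mul_le_mul_of_nonneg_left ?_ hP.le
          have ht : (s ∩ s').card ≤ m := by
            rw [← hVm s hs1]; exact card_le_card inter_subset_left
          have e : (s ∪ s').card = m + (m - (s ∩ s').card) := by
            have := card_union_add_card_inter s s'
            rw [hVm s hs1, hVm s' hs2] at this
            omega
          rw [e]
          exact rho_joint hq hmq ht
      _ = n.choose q * R ^ 2 * ∑ s ∈ V, ∑ s' ∈ V, c ^ (s ∩ s').card := by
          simp only [mul_sum]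
      _ ≤ n.choose q * R ^ 2 * ∑ s ∈ V, (V.card * (1 + c * β) ^ m) := by
          refine mul_le_mul_of_nonneg_left (sum_le_sum hin) (by positivity)
      _ = _ := by rw [sum_const, nsmul_eq_mul]; ring
  set bad : Finset α → Prop := fun y => ∀ s ∈ V, ¬ s ⊆ y with hbad
  set G := Y.filter (fun y => ¬ bad y) with hG
  have hF : 1 - badFrac bad q = G.card / n.choose q := one_sub_badFrac bad hq
  have hXG : ∑ y ∈ G, X y = ∑ y ∈ Y, X y := by
    refine sum_subset (filter_subset _ _) ?_
    intro y hy hyG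
    have hb : bad y := by
      by_contra h
      exact hyG (mem_filter.2 ⟨hy, h⟩)
    refine sum_eq_zero fun s hs' => ?_
    rw [if_neg (hb s hs')]
  have hCS : (∑ y ∈ Y, X y) ^ 2 ≤ G.card * ∑ y ∈ Y, X y ^ 2 := by
    rw [← hXG]
    refine (sq_sum_le_card_mul_sum_sq).trans ?_
    refine mul_le_mul_of_nonneg_left ?_ (by positivity)
    exact sum_le_sum_of_subset_of_nonneg (filter_subset _ _) fun _ _ _ => by positivity
  rw [hEX] at hCS
  have h5 := hCS.trans (mul_le_mul_of_nonneg_left hEX2 (by positivity))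
  rw [hF]
  rw [← mul_div_assoc, le_div_iff₀ hP, one_mul]
  have hk : 0 < (V.card : ℝ) ^ 2 * R ^ 2 * n.choose q := by positivity
  refine le_of_mul_le_mul_left ?_ hk
  linarith

lemma exists_core {α : Type*} [Fintype α] [DecidableEq α] (U : Finset (Finset α)) (m : ℕ)
    (hU : U.Nonempty) (hUm : ∀ s ∈ U, s.card = m) (b : ℝ) (hb : 1 < b) (hm : 1 ≤ m) :
    ∃ g : Finset α, (g.card : ℝ) ≤
        (Real.log ((Fintype.card α).choose m) - Real.log U.card) / Real.log b ∧
      ∃ V : Finset (Finset α), V.Nonempty ∧ (∀ s ∈ V, s.card = m - g.card) ∧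
        (∀ T : Finset α, ((V.filter (T ⊆ ·)).card : ℝ)
          ≤ V.card * (b * m / Fintype.card α) ^ T.card) ∧
        (∀ y, (∀ s ∈ V, ¬ s ⊆ y) ↔ ∀ s ∈ U, ¬ (g ⊆ s ∧ s ⊆ g ∪ y)) := by
  set n := Fintype.card α with hn
  obtain ⟨s0, hs0⟩ := hU
  have hmn : m ≤ n := by rw [← hUm s0 hs0]; exact card_le_univ _
  have hn0 : (0 : ℝ) < n := by
    have : 0 < n := by omega
    exact_mod_cast this
  have hm0 : (0 : ℝ) < m := by exact_mod_cast hm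
  set β : ℝ := b * m / n with hβ
  have hβ0 : 0 < β := by positivity
  have hU0 : (0 : ℝ) < U.card := by exact_mod_cast card_pos.2 ⟨s0, hs0⟩
  obtain ⟨g, -, hg⟩ := exists_max_image (univ : Finset (Finset α))
    (fun T => ((U.filter (T ⊆ ·)).card : ℝ) * (β⁻¹) ^ T.card) ⟨∅, mem_univ _⟩
  set Ug := U.filter (g ⊆ ·) with hUg
  have hgT : ∀ T, ((U.filter (T ⊆ ·)).card : ℝ) * β ^ g.card ≤ Ug.card * β ^ T.card := by
    intro T
    have := hg T (mem_univ _)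
    simp only [inv_pow] at this
    rwa [← div_eq_mul_inv, ← div_eq_mul_inv, div_le_div_iff₀ (by positivity) (by positivity)]
      at this
  have h1 : (U.card : ℝ) * β ^ g.card ≤ Ug.card := by
    have := hgT ∅
    simpa using this
  have hUg0 : (0 : ℝ) < Ug.card := lt_of_lt_of_le (by positivity) h1
  have hUgne : Ug.Nonempty := card_pos.1 (by exact_mod_cast hUg0)
  have h2 : (Ug.card : ℝ) ≤ n.choose m * (m / n : ℝ) ^ g.card := by
    have h3 : (Ug.card : ℝ) ≤ (((univ : Finset α).powersetCard m).filter (g ⊆ ·)).card := by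
      norm_cast
      apply card_le_card
      apply filter_subset_filter
      intro s hs
      simp [hUm s hs]
    rw [card_superset hmn g] at h3
    refine h3.trans (mul_le_mul_of_nonneg_left ?_ (by positivity))
    calc ∏ i ∈ range g.card, rho n m i ≤ ∏ i ∈ range g.card, (m / n : ℝ) := by
          refine prod_le_prod (fun i _ => rho_nonneg _ _ _) fun i _ => ?_
          refine (rho_anti hmn (Nat.zero_le i)).trans ?_
          simp [rho]
      _ = _ := by rw [prod_const, card_range]
  refine ⟨g, ?_, ?_⟩
  · rw [le_div_iff₀ (Real.log_pos hb)]
    have h4 : (U.card : ℝ) * b ^ g.card ≤ n.choose m := by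
      have h5 := h1.trans h2
      rw [hβ, mul_div_assoc, mul_pow, ← mul_assoc] at h5
      exact le_of_mul_le_mul_right h5 (by positivity)
    have h6 := Real.log_le_log (by positivity) h4
    rw [Real.log_mul hU0.ne' (by positivity), Real.log_pow] at h6
    linarith
  · refine ⟨Ug.image (· \ g), hUgne.image _, ?_, ?_, ?_⟩
    · intro s hs
      obtain ⟨t, ht, rfl⟩ := mem_image.1 hs
      rw [mem_filter] at ht
      rw [card_sdiff_of_subset ht.2, hUm t ht.1]
    · intro T
      have hinj : Set.InjOn (· \ g) (Ug : Set (Finset α)) := by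
        intro s hs t ht hst
        have hs' := (mem_filter.1 (mem_coe.1 hs)).2
        have ht' := (mem_filter.1 (mem_coe.1 ht)).2
        rw [← sdiff_union_of_subset hs', ← sdiff_union_of_subset ht']
        exact congrArg (· ∪ g) hst
      rw [card_image_of_injOn hinj]
      by_cases hd : Disjoint T g
      · have h7 : (((Ug.image (· \ g)).filter (T ⊆ ·)).card : ℝ)
            ≤ (U.filter ((g ∪ T) ⊆ ·)).card := by
          norm_cast
          refine le_trans (card_le_card (t := (U.filter ((g ∪ T) ⊆ ·)).image (· \ g)) ?_)
            card_image_le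
          intro s hs
          rw [mem_filter, mem_image] at hs
          obtain ⟨⟨t, ht, rfl⟩, hT⟩ := hs
          rw [mem_filter] at ht
          exact mem_image.2 ⟨t, mem_filter.2 ⟨ht.1, union_subset ht.2 (hT.trans sdiff_subset)⟩, rfl⟩
        refine h7.trans ?_
        have h8 := hgT (g ∪ T)
        rw [card_union_of_disjoint hd.symm, pow_add, mul_comm (β ^ g.card), ← mul_assoc] at h8
        exact le_of_mul_le_mul_right h8 (by positivity)
      · have : (Ug.image (· \ g)).filter (T ⊆ ·) = ∅ := by
          rw [filter_eq_empty_iff]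
          intro s hs hT
          obtain ⟨t, ht, rfl⟩ := mem_image.1 hs
          exact hd (disjoint_of_subset_left hT sdiff_disjoint)
        rw [this]
        simp only [card_empty, Nat.cast_zero]
        positivity
    · intro y
      constructor
      · intro h s hs hgs
        exact h (s \ g) (mem_image.2 ⟨s, mem_filter.2 ⟨hs, hgs.1⟩, rfl⟩) (sdiff_le_iff.2 hgs.2)
      · intro h s hs hsy
        obtain ⟨t, ht, rfl⟩ := mem_image.1 hs
        rw [mem_filter] at ht
        exact h t ht.1 ⟨ht.2, sdiff_le_iff.1 hsy⟩

lemma main_fintype {α : Type*} [Fintype α] [DecidableEq α] (U : Finset (Finset α)) (m l : ℕ)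
    (hU : U.Nonempty) (hUm : ∀ s ∈ U, s.card = m) (hm : 1 ≤ m) (ε lam : ℝ) (hε : 0 < ε)
    (hε1 : ε ≤ 1 / 100) (hlam : 1 ≤ lam) (hl : (m : ℝ) ^ 2 * lam / ε < l)
    (hln : l ≤ Fintype.card α) :
    ∃ g : Finset α, (g.card : ℝ) ≤
        (Real.log ((Fintype.card α).choose m) - Real.log U.card) /
          Real.log (ε * l / ((m : ℝ) ^ 2 * lam)) ∧
      badFrac (fun y => ∀ s ∈ U, ¬ (g ⊆ s ∧ s ⊆ g ∪ y)) l ≤ Real.exp (-lam) := by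
  have hm1 : (1 : ℝ) ≤ m := by exact_mod_cast hm
  have hm0 : (0 : ℝ) < m := by linarith
  have hlam0 : (0 : ℝ) < lam := by linarith
  have hl1 : (m : ℝ) ^ 2 * lam < ε * l := by
    rw [div_lt_iff₀ hε] at hl; linarith
  have hl0 : (0 : ℝ) < l := lt_of_le_of_lt (by positivity) hl
  have hb : 1 < ε * l / ((m : ℝ) ^ 2 * lam) := by
    rw [lt_div_iff₀ (by positivity)]; linarith
  obtain ⟨g, hg, V, hV, hVm, hVs, hVU⟩ := exists_core U m hU hUm _ hb hm
  refine ⟨g, hg, ?_⟩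
  set b : ℝ := ε * l / ((m : ℝ) ^ 2 * lam) with hbdef
  have hbe : (fun y => ∀ s ∈ U, ¬ (g ⊆ s ∧ s ⊆ g ∪ y)) = fun y => ∀ s ∈ V, ¬ s ⊆ y := by
    funext y; exact propext (hVU y).symm
  rw [hbe]
  set K := ⌈lam⌉₊ with hK
  have hKge : lam ≤ K := Nat.le_ceil _
  have hKle : (K : ℝ) ≤ 2 * lam := by
    have := Nat.ceil_lt_add_one hlam0.le
    linarith
  have hK0 : (0 : ℝ) < K := by linarith
  set q := l / K with hq
  have hqK : K * q ≤ l := Nat.mul_div_le _ _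
  have hql : (l : ℝ) / K < q + 1 := by
    rw [div_lt_iff₀ hK0]
    have h : l < (q + 1) * K := by
      have hK0' : 0 < K := by exact_mod_cast hK0
      exact Nat.lt_mul_of_div_lt (Nat.lt_succ_self _) hK0'
    exact_mod_cast h
  have hl2 : 100 * ((m : ℝ) ^ 2 * lam) ≤ l := by nlinarith
  have hl3 : 25 * (m : ℝ) ^ 2 ≤ l / (4 * lam) := by
    rw [le_div_iff₀ (by positivity)]; linarith
  have hl4 : (l : ℝ) / (2 * lam) ≤ l / K := by gcongr
  have hl5 : (l : ℝ) / (2 * lam) = l / (4 * lam) + l / (4 * lam) := by field_simp; norm_num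
  have hqm : (l : ℝ) / (4 * lam) ≤ (q : ℝ) - m := by nlinarith
  have hqm0 : 0 < (q : ℝ) - m := lt_of_lt_of_le (by positivity) hqm
  have hmq : m < q := by
    have : (m : ℝ) < q := by linarith
    exact_mod_cast this
  have hqn : q ≤ Fintype.card α := (Nat.div_le_self _ _).trans hln
  have hn0 : (0 : ℝ) < Fintype.card α := by
    have : 0 < Fintype.card α := by omega
    exact_mod_cast this
  have hsm := second_moment_s16 V (m - g.card) q hV hVm (by omega) hqn _ hVs
  set F := badFrac (fun y => ∀ s ∈ V, ¬ s ⊆ y) q with hF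
  have hF1 : F ≤ 1 := badFrac_le_one _ _
  have hF0 : 0 ≤ F := badFrac_nonneg _ _
  have hm' : ((m - g.card : ℕ) : ℝ) ≤ m := by exact_mod_cast Nat.sub_le _ _
  set m' := m - g.card with hm'def
  set x : ℝ := (Fintype.card α : ℝ) / ((q : ℝ) - m') * (b * m / Fintype.card α) with hx
  have hxe : x = b * m / ((q : ℝ) - m') := by
    rw [hx]; field_simp
  have hx0 : 0 ≤ x := by
    rw [hxe]
    have : 0 < (q : ℝ) - m' := by linarith
    positivity
  have hx1 : x ≤ b * m / (l / (4 * lam)) := by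
    rw [hxe]
    gcongr
    linarith
  have hx2 : m * x ≤ 4 * ε := by
    calc m * x ≤ m * (b * m / (l / (4 * lam))) := by gcongr
      _ = 4 * ε := by rw [hbdef]; field_simp
  have hp : (1 + x) ^ m' ≤ Real.exp (4 * ε) := by
    calc (1 + x) ^ m' ≤ (Real.exp x) ^ m' := by
          gcongr
          linarith [Real.add_one_le_exp x]
      _ = Real.exp (m' * x) := by rw [← Real.exp_nat_mul]
      _ ≤ _ := by
          apply Real.exp_le_exp.2
          nlinarith
  have hF2 : F ≤ 4 * ε := by
    have h1 : 1 ≤ Real.exp (4 * ε) * (1 - F) :=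
      hsm.trans (mul_le_mul_of_nonneg_right hp (by linarith))
    have h2 : Real.exp (-(4 * ε)) ≤ 1 - F := by
      rw [Real.exp_neg]
      rw [inv_le_iff_one_le_mul₀ (Real.exp_pos _)]
      linarith
    linarith [Real.add_one_le_exp (-(4 * ε))]
  have hF3 : F ≤ Real.exp (-1) := by
    have : (1 / 3 : ℝ) ≤ Real.exp (-1) := by
      rw [Real.exp_neg, ← one_div]
      exact one_div_le_one_div_of_le (Real.exp_pos _) (by linarith [Real.exp_one_lt_d9])
    linarith
  have hbm : ∀ s t : Finset α, s ⊆ t → (∀ r ∈ V, ¬ r ⊆ t) → (∀ r ∈ V, ¬ r ⊆ s) :=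
    fun s t hst h r hr hrs => h r hr (hrs.trans hst)
  calc badFrac (fun y => ∀ s ∈ V, ¬ s ⊆ y) l
      ≤ badFrac (fun y => ∀ s ∈ V, ¬ s ⊆ y) (K * q) := badFrac_antitone _ hbm hqK
    _ ≤ F ^ K := badFrac_mul _ hbm q K
    _ ≤ Real.exp (-1) ^ K := by gcongr
    _ = Real.exp (-K) := by rw [← Real.exp_nat_mul]; simp
    _ ≤ Real.exp (-lam) := by apply Real.exp_le_exp.2; linarith

end

theorem stmt_16 :
    ∃ ε₀ : ℝ, 0 < ε₀ ∧ ε₀ < 1 ∧ ∀ ε : ℝ, 0 < ε → ε ≤ ε₀ →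
      ∃ lam₀ : ℝ, 1 ≤ lam₀ ∧ ∃ n₀ : ℕ,
        ∀ n : ℕ, n₀ ≤ n → ∀ m : ℕ, 1 ≤ m →
        ∀ lam : ℝ, lam₀ ≤ lam → (m : ℝ) ^ 2 * lam ≤ ε * n →
        ∀ l : ℕ, (m : ℝ) ^ 2 * lam / ε < l → l ≤ n →
        ∀ U : Finset (Finset ℕ), U.Nonempty → U ⊆ (Finset.Icc 1 n).powersetCard m →
        ∃ g : Finset ℕ, g ⊆ Finset.Icc 1 n ∧
          (g.card : ℝ) ≤ sparsity n m U / Real.log (ε * l / ((m : ℝ) ^ 2 * lam)) ∧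
          ∃ Y : Finset (Finset ℕ), Y ⊆ (Finset.Icc 1 n).powersetCard l ∧
            ((Y.card : ℝ) ≥ (n.choose l : ℝ) * (1 - Real.exp (-lam))) ∧
            ∀ y ∈ Y, ∃ s ∈ U, g ⊆ s ∧ s ⊆ g ∪ y := by
  classical
  refine ⟨1 / 100, by norm_num, by norm_num, fun ε hε hε1 => ⟨1, le_rfl, 0, ?_⟩⟩
  intro n _ m hm lam hlam _ l hl hln U hU hUs
  let E := Finset.Icc 1 n
  let α := {x // x ∈ E}
  have hcard : Fintype.card α = n := by simp [α, E]
  let φ : Finset α → Finset ℕ := fun s => s.map (Function.Embedding.subtype _)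
  let ψ : Finset ℕ → Finset α := fun s => s.subtype (· ∈ E)
  have hφψ : ∀ s, s ⊆ E → φ (ψ s) = s := by
    intro s hs
    exact Finset.subtype_map_of_mem fun x hx => hs hx
  have hφE : ∀ s, φ s ⊆ E := by
    intro s x hx
    obtain ⟨y, _, rfl⟩ := Finset.mem_map.1 hx
    exact y.2
  have hφinj : Function.Injective φ := Finset.map_injective _
  have hUE : ∀ s ∈ U, s ⊆ E := fun s hs => (Finset.mem_powersetCard.1 (hUs hs)).1
  have hψinj : Set.InjOn ψ (U : Set (Finset ℕ)) := by
    intro s hs t ht hst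
    rw [← hφψ s (hUE s hs), ← hφψ t (hUE t ht), hst]
  obtain ⟨g, hg, hbad⟩ := main_fintype (U.image ψ) m l (hU.image _) (by
      intro s hs
      obtain ⟨t, ht, rfl⟩ := Finset.mem_image.1 hs
      rw [← (Finset.mem_powersetCard.1 (hUs ht)).2]
      conv_rhs => rw [← hφψ t (hUE t ht)]
      exact (Finset.card_map _).symm) hm ε lam hε hε1 hlam hl (hcard ▸ hln)
  rw [Finset.card_image_of_injOn hψinj, hcard] at hg
  refine ⟨φ g, hφE g, ?_, ?_⟩
  · rw [show (φ g).card = g.card from Finset.card_map _]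
    exact hg
  set bad : Finset α → Prop := fun y => ∀ s ∈ U.image ψ, ¬ (g ⊆ s ∧ s ⊆ g ∪ y) with hbd
  refine ⟨(((Finset.univ : Finset α).powersetCard l).filter (fun y => ¬ bad y)).image φ, ?_, ?_, ?_⟩
  · intro y hy
    obtain ⟨z, hz, rfl⟩ := Finset.mem_image.1 hy
    rw [Finset.mem_filter, Finset.mem_powersetCard] at hz
    refine Finset.mem_powersetCard.2 ⟨hφE z, ?_⟩
    rw [← hz.1.2]; exact Finset.card_map _
  · rw [Finset.card_image_of_injective _ hφinj]
    have h := one_sub_badFrac bad (q := l) (hcard ▸ hln)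
    rw [hcard] at h
    have hP : (0 : ℝ) < n.choose l := by exact_mod_cast Nat.choose_pos hln
    rw [eq_div_iff hP.ne'] at h
    rw [← h, mul_comm (1 - badFrac bad l)]
    refine mul_le_mul_of_nonneg_left ?_ hP.le
    linarith
  · intro y hy
    obtain ⟨z, hz, rfl⟩ := Finset.mem_image.1 hy
    have hz2 := (Finset.mem_filter.1 hz).2
    simp only [hbd] at hz2
    push Not at hz2
    obtain ⟨s, hs, hgs, hsz⟩ := hz2
    obtain ⟨t, ht, rfl⟩ := Finset.mem_image.1 hs
    refine ⟨t, ht, ?_, ?_⟩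
    · rw [← hφψ t (hUE t ht)]
      exact Finset.map_subset_map.2 hgs
    · rw [← hφψ t (hUE t ht), ← Finset.map_union]
      exact Finset.map_subset_map.2 hsz
end
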